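/- arXiv:1305.6420 — 2 statements merged into one kernel-verified Lean document; each statement's English description precedes it below -/
import Mathlib

section
/- Let ℓ₁² denote ℝ² equipped with the norm ‖(a,b)‖ = |a| + |b|, and let Y be a strictly convex real Banach space. If the pair (ℓ₁², Y) has the Bishop–Phelps–Bollobás property, then Y is uniformly convex. -/
open scoped ENNReal

/-- A pair `(X, Y)` of normed spaces has the Bishop–Phelps–Bollobás property with the
function `η : (0,1) → (0,∞)` (encoded as `η : ℝ → ℝ`, relevant only on `(0,1)`). -/
def BPBpWith (X Y : Type*) [NormedAddCommGroup X] [NormedSpace ℝ X]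
    [NormedAddCommGroup Y] [NormedSpace ℝ Y] (η : ℝ → ℝ) : Prop :=
  ∀ ε ∈ Set.Ioo (0 : ℝ) 1, ∀ (T₀ : X →L[ℝ] Y) (x₀ : X),
    ‖T₀‖ = 1 → ‖x₀‖ = 1 → 1 - η ε < ‖T₀ x₀‖ →
      ∃ (S : X →L[ℝ] Y) (x : X),
        ‖x‖ = 1 ∧ ‖S‖ = 1 ∧ ‖S x‖ = 1 ∧ ‖x - x₀‖ < ε ∧ ‖S - T₀‖ < ε

/-- The pair `(X, Y)` has the Bishop–Phelps–Bollobás property. -/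
def HasBPBp (X Y : Type*) [NormedAddCommGroup X] [NormedSpace ℝ X]
    [NormedAddCommGroup Y] [NormedSpace ℝ Y] : Prop :=
  ∃ η : ℝ → ℝ, (∀ ε ∈ Set.Ioo (0 : ℝ) 1, 0 < η ε) ∧ BPBpWith X Y η

/-! Unit vectors `x`, `y` of `Y` are the images of two coordinate vectors under a norm-one operator
`T` on `ℓ₁`, and if `‖x + y‖` is close to `2` then `T` almost attains its norm at their midpoint.
The Bishop–Phelps–Bollobás property yields `S` close to `T` attaining its norm at a unit vector `z`
so close to the midpoint that both coordinates of `z` are positive. By strict convexity `S` is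
constant on the face of the `ℓ₁`-ball containing `z`, hence agrees at the two coordinate vectors,
which forces `x` and `y` to be close. -/

theorem eq_of_norm_sub_smul_le {Y : Type*} [NormedAddCommGroup Y] [NormedSpace ℝ Y]
    [StrictConvexSpace ℝ Y] {y z : Y} {a : ℝ} (ha : 0 < a) (hy : ‖y‖ ≤ ‖z‖)
    (hyz : ‖z - a • y‖ ≤ (1 - a) * ‖z‖) : y = z := by
  have hsum : a • y + (z - a • y) = z := add_sub_cancel _ _
  have hay : ‖a • y‖ = a * ‖y‖ := norm_smul_of_nonneg ha.le y
  have htri : ‖z‖ ≤ ‖a • y‖ + ‖z - a • y‖ := norm_le_norm_add_norm_sub' z (a • y)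
  have hnorm : ‖y‖ = ‖z‖ := hy.antisymm (by nlinarith)
  have hray : SameRay ℝ (a • y) (z - a • y) := by
    rw [sameRay_iff_norm_add, hsum]
    exact htri.antisymm (by rw [hay, hnorm]; linarith)
  have hyray : SameRay ℝ y (z - a • y) := (SameRay.sameRay_pos_smul_right y ha).trans hray
    fun h => Or.inl ((smul_eq_zero_iff_right ha.ne').mp h)
  have hyzray : SameRay ℝ y z := hsum ▸ (SameRay.sameRay_pos_smul_right y ha).add_right hyray
  exact hyzray.eq_of_norm_eq hnorm

section L1

variable {ι : Type*} [Fintype ι]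

section Norm

variable {E : ι → Type*} [∀ i, SeminormedAddCommGroup (E i)] [DecidableEq ι]

theorem l1_norm_sub_single (z : PiLp 1 E) (i : ι) :
    ‖z - PiLp.single 1 i (z i)‖ = ‖z‖ - ‖z i‖ := by
  rw [PiLp.norm_eq_of_L1, PiLp.norm_eq_of_L1, ← Finset.add_sum_erase _ _ (Finset.mem_univ i),
    ← Finset.add_sum_erase _ (fun k => ‖z k‖) (Finset.mem_univ i)]
  have hoff : ∀ k ∈ Finset.univ.erase i, ‖(z - PiLp.single 1 i (z i)) k‖ = ‖z k‖ := fun k hk => by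
    rw [PiLp.sub_apply, PiLp.single_eq_of_ne 1 (Finset.ne_of_mem_erase hk), sub_zero]
  rw [Finset.sum_congr rfl hoff, PiLp.sub_apply, PiLp.single_eq_same, sub_self, norm_zero,
    zero_add, add_sub_cancel_left]

theorem l1_norm_single_add_single {i j : ι} (hij : i ≠ j) (a : E i) (b : E j) :
    ‖(PiLp.single 1 i a + PiLp.single 1 j b : PiLp 1 E)‖ = ‖a‖ + ‖b‖ := by
  have h := l1_norm_sub_single (PiLp.single 1 i a + PiLp.single 1 j b : PiLp 1 E) i
  rw [PiLp.add_apply, PiLp.single_eq_same, PiLp.single_eq_of_ne 1 hij, add_zero,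
    add_sub_cancel_left, PiLp.norm_single] at h
  linarith

theorem l1_norm_sub_smul_single_one {𝕜 : Type*} [SeminormedRing 𝕜]
    (z : PiLp 1 (fun _ : ι => 𝕜)) (i : ι) :
    ‖z - z i • PiLp.single 1 i 1‖ = ‖z‖ - ‖z i‖ := by
  have hsmul : z i • PiLp.single 1 i 1 = (PiLp.single 1 i (z i) : PiLp 1 (fun _ : ι => 𝕜)) := by
    ext k
    simp [PiLp.single_apply]
  rw [hsmul, l1_norm_sub_single]

end Norm

section Lift

variable (𝕜 : Type*) [NontriviallyNormedField 𝕜] {Y : Type*} [SeminormedAddCommGroup Y]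
  [NormedSpace 𝕜 Y]

/-- The continuous linear map from the finite-dimensional `ℓ₁`-space on `ι` sending the `i`-th
coordinate vector to `w i`, through which families of vectors of `Y` are viewed as operators. -/
noncomputable def l1Lift (w : ι → Y) : PiLp 1 (fun _ : ι => 𝕜) →L[𝕜] Y :=
  ∑ i, (PiLp.proj 1 (fun _ : ι => 𝕜) i).smulRight (w i)

theorem l1Lift_apply (w : ι → Y) (v : PiLp 1 (fun _ : ι => 𝕜)) :
    l1Lift 𝕜 w v = ∑ i, v i • w i := by
  simp [l1Lift]

theorem l1Lift_single_one [DecidableEq ι] (w : ι → Y) (i : ι) :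
    l1Lift 𝕜 w (PiLp.single 1 i 1) = w i := by
  simp [l1Lift_apply, PiLp.single_apply]

theorem norm_l1Lift (w : ι → Y) : ‖l1Lift 𝕜 w‖ = ‖w‖ := by
  classical
  apply le_antisymm
  · refine (l1Lift 𝕜 w).opNorm_le_bound (norm_nonneg w) fun v => ?_
    calc ‖l1Lift 𝕜 w v‖ = ‖∑ i, v i • w i‖ := by rw [l1Lift_apply]
      _ ≤ ∑ i, ‖v i‖ * ‖w i‖ := norm_sum_le_of_le _ fun i _ => norm_smul_le _ _
      _ ≤ ∑ i, ‖v i‖ * ‖w‖ := by gcongr with i; exact norm_le_pi_norm w i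
      _ = ‖w‖ * ‖v‖ := by rw [← Finset.sum_mul, ← PiLp.norm_eq_of_L1, mul_comm]
  · refine (pi_norm_le_iff_of_nonneg (norm_nonneg _)).2 fun i => ?_
    simpa [l1Lift_single_one] using (l1Lift 𝕜 w).le_opNorm (PiLp.single 1 i 1)

end Lift

variable {Y : Type*} [NormedAddCommGroup Y] [NormedSpace ℝ Y] [StrictConvexSpace ℝ Y]

theorem map_single_one_eq_of_norm_attained [DecidableEq ι]
    {S : PiLp 1 (fun _ : ι => ℝ) →L[ℝ] Y} {z : PiLp 1 (fun _ : ι => ℝ)} (hz : ‖z‖ = 1)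
    (hSz : ‖S z‖ = ‖S‖) {i : ι} (hi : 0 < z i) : S (PiLp.single 1 i 1) = S z := by
  apply eq_of_norm_sub_smul_le hi
  · simpa [hSz] using S.le_opNorm (PiLp.single 1 i 1)
  · calc ‖S z - z i • S (PiLp.single 1 i 1)‖ = ‖S (z - z i • PiLp.single 1 i 1)‖ := by
          rw [map_sub, map_smul]
      _ ≤ ‖S‖ * ‖z - z i • PiLp.single 1 i 1‖ := S.le_opNorm _
      _ = (1 - z i) * ‖S z‖ := by
          rw [l1_norm_sub_smul_single_one, hz, Real.norm_of_nonneg hi.le, hSz, mul_comm]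

theorem BPBpWith.norm_sub_lt_of_lt_norm_add {η : ℝ → ℝ}
    (hB : BPBpWith (PiLp 1 (fun _ : ι => ℝ)) Y η) {ε : ℝ} (hε : 0 < ε) (hε' : ε ≤ 1 / 2)
    {w : ι → Y} (hw : ‖w‖ = 1) {i j : ι} (hij : i ≠ j) (hadd : 2 - 2 * η ε < ‖w i + w j‖) :
    ‖w i - w j‖ < 2 * ε := by
  classical
  set T := l1Lift ℝ w
  let e (k : ι) : PiLp 1 (fun _ : ι => ℝ) := PiLp.single 1 k 1
  have he (k : ι) : ‖e k‖ = 1 := by simp [e]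
  have hT (k : ι) : T (e k) = w k := l1Lift_single_one ℝ w k
  let c : PiLp 1 (fun _ : ι => ℝ) := (1 / 2 : ℝ) • (e i + e j)
  have hc : ‖c‖ = 1 := by
    simp only [c, e, norm_smul, l1_norm_single_add_single hij]
    norm_num
  have hci : c i = 1 / 2 := by simp [c, e, hij]
  have hcj : c j = 1 / 2 := by simp [c, e, hij.symm]
  have hTc : 1 - η ε < ‖T c‖ := by
    rw [map_smul, map_add, hT, hT, norm_smul, Real.norm_of_nonneg (by norm_num)]
    linarith
  obtain ⟨S, z, hz, hS, hSz, hzc, hST⟩ :=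
    hB ε ⟨hε, by linarith⟩ T c ((norm_l1Lift ℝ w).trans hw) hc hTc
  have hpos {k : ι} (hck : c k = 1 / 2) : 0 < z k := by
    have hk : |z k - c k| ≤ ‖z - c‖ := PiLp.norm_apply_le (z - c) k
    linarith [neg_le_of_abs_le hk]
  have hSij : S (e i) = S (e j) :=
    (map_single_one_eq_of_norm_attained hz (hSz.trans hS.symm) (hpos hci)).trans
      (map_single_one_eq_of_norm_attained hz (hSz.trans hS.symm) (hpos hcj)).symm
  have hclose (k : ι) : ‖S (e k) - w k‖ < ε := by
    rw [← hT k, ← sub_apply]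
    exact ((S - T).unit_le_opNorm (e k) (he k).le).trans_lt hST
  calc ‖w i - w j‖ = ‖(S (e j) - w j) - (S (e i) - w i)‖ := by rw [hSij, sub_sub_sub_cancel_left]
    _ ≤ ‖S (e j) - w j‖ + ‖S (e i) - w i‖ := norm_sub_le _ _
    _ < 2 * ε := by linarith [hclose i, hclose j]

theorem uniformConvex_of_bpbp_l1sq_domain_general [Nontrivial ι]
    (h : HasBPBp (PiLp 1 (fun _ : ι => ℝ)) Y) : UniformConvexSpace Y := by
  classical
  obtain ⟨η, hη, hB⟩ := h
  obtain ⟨i, j, hij⟩ := exists_pair_ne ι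
  refine ⟨fun ε hε => ?_⟩
  set ρ := min (ε / 2) (1 / 2)
  have hρ : 0 < ρ := by positivity
  have hρ_half : ρ ≤ 1 / 2 := min_le_right _ _
  have hρε : ρ ≤ ε / 2 := min_le_left _ _
  have hηρ : 0 < η ρ := hη ρ ⟨hρ, by linarith⟩
  refine ⟨2 * η ρ, by positivity, fun x hx y hy hxy => ?_⟩
  by_contra! hadd
  let w : ι → Y := Function.update (fun _ => y) i x
  have hwi : w i = x := Function.update_self i x fun _ => y
  have hwj : w j = y := Function.update_of_ne hij.symm x fun _ => y
  have hunit : ∀ k, ‖w k‖ = 1 :=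
    (Function.forall_update_iff _ fun _ v => ‖v‖ = 1).2 ⟨hx, fun _ _ => hy⟩
  have hw : ‖w‖ = 1 := le_antisymm
    ((pi_norm_le_iff_of_nonneg zero_le_one).2 fun k => (hunit k).le)
    (hunit i ▸ norm_le_pi_norm w i)
  have hsub := hB.norm_sub_lt_of_lt_norm_add hρ hρ_half hw hij (by rwa [hwi, hwj])
  rw [hwi, hwj] at hsub
  linarith

end L1

/-- If `Y` is strictly convex and `(ℓ₁², Y)` has the BPBp, then `Y` is uniformly convex. -/
theorem uniformConvex_of_bpbp_l1sq_domain
    (Y : Type*) [NormedAddCommGroup Y] [NormedSpace ℝ Y] [CompleteSpace Y]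
    [StrictConvexSpace ℝ Y]
    (h : HasBPBp (PiLp 1 (fun _ : Fin 2 => ℝ)) Y) :
    UniformConvexSpace Y :=
  uniformConvex_of_bpbp_l1sq_domain_general h
end

section
/- There exists a reflexive real Banach space X (i.e. the canonical isometric embedding of X into its bidual X** is surjective) such that the pair (X,X) fails the Bishop–Phelps–Bollobás property. -/
open scoped ENNReal

/-!
The Bishop–Phelps–Bollobás property passes, with the same `η`, from a pair of `ℓ₁`-sums to a pair of
summands. With `X = ℓ₁² ⊕₁ Y`, it would therefore pass from `(X, X)` to `(ℓ₁², Y)`. For strictly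
convex `Y` this forces `Y` to be uniformly convex: an almost midpoint-attaining operator
`(a, b) ↦ a • y₁ + b • y₂` is close to a norm-one operator `S` that attains its norm inside the edge
`[e₁, e₂]` of the sphere of `ℓ₁²`, and strict convexity gives `S e₁ = S e₂`, so `y₁` and `y₂` are
close.

It remains to find a reflexive, strictly convex `Y` that is not uniformly convex. The sphere of
`ℝ ⊕_∞ ℓ²` contains the segments `[(1, -eₙ), (1, eₙ)]`; adding to the norm the Hilbert norm of
`(t, (1/(n+1) * xₙ)ₙ)` makes it strictly convex, while these segments remain asymptotically flat.
-/

noncomputable section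

open ContinuousLinearMap
open scoped lp

section Reflexivity

/-- A normed space is reflexive if its canonical map into the double dual is surjective. -/
def ReflexiveSpace (𝕜 E : Type*) [NontriviallyNormedField 𝕜] [NormedAddCommGroup E]
    [NormedSpace 𝕜 E] : Prop :=
  Function.Surjective (NormedSpace.inclusionInDoubleDual 𝕜 E)

namespace ReflexiveSpace

variable {𝕜 E F : Type*} [NontriviallyNormedField 𝕜] [NormedAddCommGroup E] [NormedSpace 𝕜 E]
  [NormedAddCommGroup F] [NormedSpace 𝕜 F]

theorem congr (hE : ReflexiveSpace 𝕜 E) (e : E ≃L[𝕜] F) : ReflexiveSpace 𝕜 F := by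
  intro φ
  obtain ⟨x, hx⟩ := hE (φ ∘L precomp 𝕜 (e.symm : F →L[𝕜] E))
  refine ⟨e x, ext fun f => ?_⟩
  calc f (e x) = φ ((f ∘L (e : E →L[𝕜] F)) ∘L (e.symm : F →L[𝕜] E)) :=
        congr($hx (f ∘L (e : E →L[𝕜] F)))
    _ = φ f := by rw [comp_assoc, e.coe_comp_coe_symm, comp_id]

theorem prod (hE : ReflexiveSpace 𝕜 E) (hF : ReflexiveSpace 𝕜 F) : ReflexiveSpace 𝕜 (E × F) := by
  intro φ
  obtain ⟨x, hx⟩ := hE (φ ∘L precomp 𝕜 (fst 𝕜 E F))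
  obtain ⟨y, hy⟩ := hF (φ ∘L precomp 𝕜 (snd 𝕜 E F))
  refine ⟨(x, y), ext fun f => ?_⟩
  have hx' : f (x, 0) = φ ((f ∘L inl 𝕜 E F) ∘L fst 𝕜 E F) := congr($hx (f ∘L inl 𝕜 E F))
  have hy' : f (0, y) = φ ((f ∘L inr 𝕜 E F) ∘L snd 𝕜 E F) := congr($hy (f ∘L inr 𝕜 E F))
  have hf : f = (f ∘L inl 𝕜 E F) ∘L fst 𝕜 E F + (f ∘L inr 𝕜 E F) ∘L snd 𝕜 E F :=
    (coprod_comp_inl_inr f).symm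
  calc f (x, y) = f (x, 0) + f (0, y) := by rw [← map_add]; simp
    _ = φ f := by rw [hx', hy', ← map_add, ← hf]

theorem withLp_prod (p : ℝ≥0∞) [Fact (1 ≤ p)] (hE : ReflexiveSpace 𝕜 E)
    (hF : ReflexiveSpace 𝕜 F) : ReflexiveSpace 𝕜 (WithLp p (E × F)) :=
  (hE.prod hF).congr (WithLp.prodContinuousLinearEquiv p 𝕜 E F).symm

theorem of_innerProductSpace (𝕜 H : Type*) [RCLike 𝕜] [NormedAddCommGroup H]
    [InnerProductSpace 𝕜 H] [CompleteSpace H] : ReflexiveSpace 𝕜 H := by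
  intro φ
  let toDual := InnerProductSpace.toDual 𝕜 H
  let conjφ : StrongDual 𝕜 H :=
    ((starL 𝕜 : 𝕜 ≃L⋆[𝕜] 𝕜) : 𝕜 →L⋆[𝕜] 𝕜) ∘SL φ ∘SL
      (toDual.toContinuousLinearEquiv : H →L⋆[𝕜] StrongDual 𝕜 H)
  refine ⟨toDual.symm conjφ, ext fun f => ?_⟩
  calc f (toDual.symm conjφ) = inner 𝕜 (toDual.symm f) (toDual.symm conjφ) :=
        InnerProductSpace.toDual_symm_apply.symm
    _ = star (conjφ (toDual.symm f)) := by
        rw [← inner_conj_symm, InnerProductSpace.toDual_symm_apply]; rfl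
    _ = φ f := by simp [conjφ]

theorem completeSpace {𝕜 E : Type*} [RCLike 𝕜] [NormedAddCommGroup E] [NormedSpace 𝕜 E]
    (hE : ReflexiveSpace 𝕜 E) : CompleteSpace E :=
  ((NormedSpace.inclusionInDoubleDualLi 𝕜).isometry.isUniformInducing.completeSpace_congr hE).mpr
    inferInstance

end ReflexiveSpace

end Reflexivity

section WithLpSums

variable (p : ℝ≥0∞) [Fact (1 ≤ p)] (𝕜 E F : Type*) {G : Type*} [NontriviallyNormedField 𝕜]
  [NormedAddCommGroup E] [NormedSpace 𝕜 E] [NormedAddCommGroup F] [NormedSpace 𝕜 F]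
  [NormedAddCommGroup G] [NormedSpace 𝕜 G]

/-- The inclusion of the first summand into an `ℓₚ`-sum, as a linear isometry. -/
def withLpInl : E →ₗᵢ[𝕜] WithLp p (E × F) where
  toLinearMap := (WithLp.linearEquiv p 𝕜 (E × F)).symm.toLinearMap ∘ₗ LinearMap.inl 𝕜 E F
  norm_map' := WithLp.norm_toLp_fst p E F

/-- The inclusion of the second summand into an `ℓₚ`-sum, as a linear isometry. -/
def withLpInr : F →ₗᵢ[𝕜] WithLp p (E × F) where
  toLinearMap := (WithLp.linearEquiv p 𝕜 (E × F)).symm.toLinearMap ∘ₗ LinearMap.inr 𝕜 E F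
  norm_map' := WithLp.norm_toLp_snd p E F

variable {p 𝕜 E F}

@[simp]
theorem fst_withLpInl (x : E) : (withLpInl p 𝕜 E F x).fst = x := rfl

@[simp]
theorem snd_withLpInl (x : E) : (withLpInl p 𝕜 E F x).snd = 0 := rfl

@[simp]
theorem fst_withLpInr (y : F) : (withLpInr p 𝕜 E F y).fst = 0 := rfl

@[simp]
theorem snd_withLpInr (y : F) : (withLpInr p 𝕜 E F y).snd = y := rfl

theorem withLpInl_fst_add_withLpInr_snd (x : WithLp p (E × F)) :
    withLpInl p 𝕜 E F x.fst + withLpInr p 𝕜 E F x.snd = x :=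
  WithLp.ofLp_injective p (Prod.ext (add_zero _) (zero_add _))

theorem opNorm_eq_one_of_norm_apply_eq_one {S : E →L[𝕜] G} {x : E} (hS : ‖S‖ ≤ 1) (hx : ‖x‖ = 1)
    (hSx : ‖S x‖ = 1) : ‖S‖ = 1 :=
  le_antisymm hS (by simpa only [hx, hSx, mul_one] using S.le_opNorm x)

theorem opNorm_comp_fstL (T : E →L[𝕜] G) : ‖T ∘L WithLp.fstL p 𝕜 E F‖ = ‖T‖ := by
  refine le_antisymm (opNorm_le_bound _ (norm_nonneg T) fun x => ?_)
    (opNorm_le_bound _ (norm_nonneg _) fun x => ?_)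
  · exact T.le_opNorm_of_le (WithLp.norm_fst_le E x)
  · simpa using (T ∘L WithLp.fstL p 𝕜 E F).le_opNorm (withLpInl p 𝕜 E F x)

theorem norm_apply_withLpInl_fst_eq {S : WithLp 1 (E × F) →L[𝕜] G} (hS : ‖S‖ ≤ 1)
    {x : WithLp 1 (E × F)} (hSx : ‖S x‖ = ‖x‖) :
    ‖S (withLpInl 1 𝕜 E F x.fst)‖ = ‖x.fst‖ := by
  have hfst : ‖S (withLpInl 1 𝕜 E F x.fst)‖ ≤ ‖x.fst‖ := by
    simpa using S.le_of_opNorm_le hS (withLpInl 1 𝕜 E F x.fst)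
  have hsnd : ‖S (withLpInr 1 𝕜 E F x.snd)‖ ≤ ‖x.snd‖ := by
    simpa using S.le_of_opNorm_le hS (withLpInr 1 𝕜 E F x.snd)
  have hsum : ‖x.fst‖ + ‖x.snd‖ ≤
      ‖S (withLpInl 1 𝕜 E F x.fst)‖ + ‖S (withLpInr 1 𝕜 E F x.snd)‖ := by
    rw [← WithLp.prod_norm_eq_of_L1, ← hSx]
    conv_lhs => rw [← withLpInl_fst_add_withLpInr_snd (𝕜 := 𝕜) x, map_add]
    exact norm_add_le _ _
  linarith

end WithLpSums

section BishopPhelpsBollobas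

variable {X X₁ X₂ Y Y₁ Y₂ : Type*}
  [NormedAddCommGroup X] [NormedSpace ℝ X] [NormedAddCommGroup X₁] [NormedSpace ℝ X₁]
  [NormedAddCommGroup X₂] [NormedSpace ℝ X₂] [NormedAddCommGroup Y] [NormedSpace ℝ Y]
  [NormedAddCommGroup Y₁] [NormedSpace ℝ Y₁] [NormedAddCommGroup Y₂] [NormedSpace ℝ Y₂]
  {η : ℝ → ℝ}

theorem norm_inv_norm_smul_fst_sub_le {x : WithLp 1 (X₁ × X₂)} (hx : ‖x‖ = 1) (hfst : x.fst ≠ 0)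
    (x₀ : X₁) : ‖‖x.fst‖⁻¹ • x.fst - x₀‖ ≤ ‖x - withLpInl 1 ℝ X₁ X₂ x₀‖ := by
  have hnorm : ‖x.fst‖ + ‖x.snd‖ = 1 := by rw [← WithLp.prod_norm_eq_of_L1, hx]
  have hpos : 0 < ‖x.fst‖ := norm_pos_iff.mpr hfst
  have hscale : ‖‖x.fst‖⁻¹ • x.fst - x.fst‖ = ‖x.snd‖ := by
    have hcoef : 0 ≤ ‖x.fst‖⁻¹ - 1 :=
      sub_nonneg.mpr ((one_le_inv₀ hpos).mpr (by linarith [norm_nonneg x.snd]))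
    calc ‖‖x.fst‖⁻¹ • x.fst - x.fst‖ = (‖x.fst‖⁻¹ - 1) * ‖x.fst‖ := by
          rw [← norm_smul_of_nonneg hcoef, sub_smul, one_smul]
      _ = ‖x.snd‖ := by rw [sub_mul, inv_mul_cancel₀ hpos.ne']; linarith
  calc ‖‖x.fst‖⁻¹ • x.fst - x₀‖ ≤ ‖‖x.fst‖⁻¹ • x.fst - x.fst‖ + ‖x.fst - x₀‖ :=
        norm_sub_le_norm_sub_add_norm_sub _ _ _
    _ = ‖x - withLpInl 1 ℝ X₁ X₂ x₀‖ := by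
        rw [hscale, WithLp.prod_norm_eq_of_L1, add_comm]; simp

theorem BPBpWith.of_withLp_prod_domain (h : BPBpWith (WithLp 1 (X₁ × X₂)) Y η) :
    BPBpWith X₁ Y η := by
  intro ε hε T x₀ hT hx₀ hTx₀
  obtain ⟨S, x, hx, hS, hSx, hxx₀, hST⟩ := h ε hε (T ∘L WithLp.fstL 1 ℝ X₁ X₂)
    (withLpInl 1 ℝ X₁ X₂ x₀) (by rw [opNorm_comp_fstL, hT]) (by rw [LinearIsometry.norm_map, hx₀])
    (by simpa using hTx₀)
  have hfst : x.fst ≠ 0 := by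
    intro hzero
    have hdist : ‖x - withLpInl 1 ℝ X₁ X₂ x₀‖ = 1 + ‖x.snd‖ := by
      rw [WithLp.prod_norm_eq_of_L1]; simp [hzero, hx₀]
    linarith [hε.2, norm_nonneg x.snd]
  have hunit : ‖‖x.fst‖⁻¹ • x.fst‖ = 1 := norm_smul_inv_norm (𝕜 := ℝ) hfst
  have hattain : ‖(S ∘L (withLpInl 1 ℝ X₁ X₂).toContinuousLinearMap) (‖x.fst‖⁻¹ • x.fst)‖ = 1 := by
    rw [map_smul, norm_smul, ← hunit, norm_smul]
    congr 1
    exact norm_apply_withLpInl_fst_eq hS.le (hSx.trans hx.symm)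
  have hcontr (R : WithLp 1 (X₁ × X₂) →L[ℝ] Y) :
      ‖R ∘L (withLpInl 1 ℝ X₁ X₂).toContinuousLinearMap‖ ≤ ‖R‖ :=
    opNorm_le_bound _ (norm_nonneg R) fun z => by
      simpa using R.le_opNorm (withLpInl 1 ℝ X₁ X₂ z)
  refine ⟨S ∘L (withLpInl 1 ℝ X₁ X₂).toContinuousLinearMap, ‖x.fst‖⁻¹ • x.fst, hunit,
    opNorm_eq_one_of_norm_apply_eq_one ((hcontr S).trans hS.le) hunit hattain, hattain,
    (norm_inv_norm_smul_fst_sub_le hx hfst x₀).trans_lt hxx₀, ?_⟩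
  exact (hcontr (S - T ∘L WithLp.fstL 1 ℝ X₁ X₂)).trans_lt hST

/-- The retraction is `(y₁, y₂) ↦ y₂ + g y₁ • u`, with `g` a norming functional of `y.fst` and
`u` the direction of `y.snd`. -/
theorem exists_retraction_snd_norm_apply_eq [Nontrivial Y₂] (y : WithLp 1 (Y₁ × Y₂)) :
    ∃ R : WithLp 1 (Y₁ × Y₂) →L[ℝ] Y₂,
      ‖R‖ ≤ 1 ∧ (∀ z, R (withLpInr 1 ℝ Y₁ Y₂ z) = z) ∧ ‖R y‖ = ‖y‖ := by
  obtain ⟨g, hg, hgy⟩ := exists_dual_vector'' ℝ y.fst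
  obtain ⟨u, hu, huy⟩ : ∃ u : Y₂, ‖u‖ = 1 ∧ ‖y.snd‖ • u = y.snd := by
    rcases eq_or_ne y.snd 0 with hzero | hne
    · obtain ⟨u, hu⟩ := exists_norm_eq Y₂ zero_le_one
      exact ⟨u, hu, by simp [hzero]⟩
    · exact ⟨‖y.snd‖⁻¹ • y.snd, norm_smul_inv_norm (𝕜 := ℝ) hne,
        smul_inv_smul₀ (norm_ne_zero_iff.mpr hne) _⟩
  refine ⟨WithLp.sndL 1 ℝ Y₁ Y₂ + (g ∘L WithLp.fstL 1 ℝ Y₁ Y₂).smulRight u,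
    opNorm_le_bound _ zero_le_one fun z => ?_, fun z => by simp, ?_⟩
  · calc ‖z.snd + g z.fst • u‖ ≤ ‖z.snd‖ + ‖g z.fst‖ * ‖u‖ := by
          rw [← norm_smul]; exact norm_add_le _ _
      _ ≤ ‖z.snd‖ + ‖z.fst‖ := by
          rw [hu, mul_one]; gcongr; simpa using g.le_of_opNorm_le hg z.fst
      _ = 1 * ‖z‖ := by rw [one_mul, WithLp.prod_norm_eq_of_L1, add_comm]
  · calc ‖y.snd + g y.fst • u‖ = ‖(‖y.snd‖ + ‖y.fst‖) • u‖ := by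
          rw [hgy, add_smul, huy]; rfl
      _ = ‖y‖ := by
          rw [norm_smul_of_nonneg (by positivity), hu, mul_one, WithLp.prod_norm_eq_of_L1, add_comm]

theorem BPBpWith.of_withLp_prod_codomain (h : BPBpWith X (WithLp 1 (Y₁ × Y₂)) η) :
    BPBpWith X Y₂ η := by
  intro ε hε T x₀ hT hx₀ hTx₀
  have : Nontrivial Y₂ := by
    by_contra htrivial
    have := not_nontrivial_iff_subsingleton.mp htrivial
    simp [Subsingleton.elim T 0] at hT
  let T' := (withLpInr 1 ℝ Y₁ Y₂).toContinuousLinearMap ∘L T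
  obtain ⟨S, x, hx, hS, hSx, hxx₀, hST⟩ := h ε hε T' x₀
    (by rw [LinearIsometry.norm_toContinuousLinearMap_comp, hT]) hx₀
    (by simpa [T'] using hTx₀)
  obtain ⟨R, hR, hretract, hRSx⟩ := exists_retraction_snd_norm_apply_eq (S x)
  have hcontr (A : X →L[ℝ] WithLp 1 (Y₁ × Y₂)) : ‖R ∘L A‖ ≤ ‖A‖ :=
    (opNorm_comp_le R A).trans (mul_le_of_le_one_left (norm_nonneg A) hR)
  have hRT : R ∘L T' = T := ext fun z => hretract (T z)
  have hattain : ‖(R ∘L S) x‖ = 1 := hRSx.trans hSx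
  refine ⟨R ∘L S, x, hx,
    opNorm_eq_one_of_norm_apply_eq_one ((hcontr S).trans hS.le) hx hattain, hattain, hxx₀, ?_⟩
  calc ‖R ∘L S - T‖ = ‖R ∘L (S - T')‖ := by rw [comp_sub, hRT]
    _ < ε := (hcontr _).trans_lt hST

theorem HasBPBp.of_withLp_prod (h : HasBPBp (WithLp 1 (X₁ × X₂)) (WithLp 1 (Y₁ × Y₂))) :
    HasBPBp X₁ Y₂ :=
  let ⟨η, hη, hBPBp⟩ := h
  ⟨η, hη, hBPBp.of_withLp_prod_domain.of_withLp_prod_codomain⟩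

theorem apply_eq_of_norm_apply_combo_eq_one [StrictConvexSpace ℝ Y] {S : X →L[ℝ] Y}
    (hS : ‖S‖ ≤ 1) {u v : X} (hu : ‖u‖ ≤ 1) (hv : ‖v‖ ≤ 1) {a b : ℝ} (ha : 0 < a) (hb : 0 < b)
    (hab : a + b = 1) (hattain : ‖S (a • u + b • v)‖ = 1) : S u = S v := by
  by_contra hne
  refine (norm_combo_lt_of_ne (S.unit_le_opNorm u hu |>.trans hS)
    (S.unit_le_opNorm v hv |>.trans hS) hne ha hb hab).ne ?_
  rwa [← map_smul, ← map_smul, ← map_add]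

/-- The operator `(a, b) ↦ a • y₁ + b • y₂` on `ℓ₁²`. -/
def l1Combo (y₁ y₂ : Y) : WithLp 1 (ℝ × ℝ) →L[ℝ] Y :=
  ((toSpanSingleton ℝ y₁).coprod (toSpanSingleton ℝ y₂)) ∘L
    (WithLp.prodContinuousLinearEquiv 1 ℝ ℝ ℝ : WithLp 1 (ℝ × ℝ) →L[ℝ] ℝ × ℝ)

theorem l1Combo_apply (y₁ y₂ : Y) (x : WithLp 1 (ℝ × ℝ)) :
    l1Combo y₁ y₂ x = x.fst • y₁ + x.snd • y₂ := rfl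

theorem norm_l1Combo {y₁ y₂ : Y} (hy₁ : ‖y₁‖ = 1) (hy₂ : ‖y₂‖ ≤ 1) : ‖l1Combo y₁ y₂‖ = 1 := by
  refine opNorm_eq_one_of_norm_apply_eq_one (x := withLpInl 1 ℝ ℝ ℝ 1)
    (opNorm_le_bound _ zero_le_one fun x => ?_) (by simp) (by simp [l1Combo_apply, hy₁])
  calc ‖x.fst • y₁ + x.snd • y₂‖ ≤ ‖x.fst‖ * ‖y₁‖ + ‖x.snd‖ * ‖y₂‖ := by
        rw [← norm_smul, ← norm_smul]; exact norm_add_le _ _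
    _ ≤ ‖x.fst‖ * 1 + ‖x.snd‖ * 1 := by gcongr; exact hy₁.le
    _ = 1 * ‖x‖ := by rw [WithLp.prod_norm_eq_of_L1]; ring

theorem l1_coords_pos_of_norm_sub_lt_one {x : WithLp 1 (ℝ × ℝ)} (hx : ‖x‖ = 1)
    (hdist : ‖x - WithLp.toLp 1 (1 / 2, 1 / 2)‖ < 1) : 0 < x.fst ∧ 0 < x.snd := by
  simp only [WithLp.prod_norm_eq_of_L1, WithLp.sub_fst, WithLp.sub_snd, WithLp.toLp_fst,
    WithLp.toLp_snd, Real.norm_eq_abs] at hx hdist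
  constructor <;> by_contra! <;> grind

theorem BPBpWith.norm_sub_lt [StrictConvexSpace ℝ Y] (h : BPBpWith (WithLp 1 (ℝ × ℝ)) Y η)
    {ε : ℝ} (hε : ε ∈ Set.Ioo 0 1) {y₁ y₂ : Y} (hy₁ : ‖y₁‖ = 1) (hy₂ : ‖y₂‖ = 1)
    (hadd : 2 - 2 * η ε < ‖y₁ + y₂‖) : ‖y₁ - y₂‖ < 2 * ε := by
  let T := l1Combo y₁ y₂
  have hTmid : ‖T (WithLp.toLp 1 (1 / 2, 1 / 2))‖ = ‖y₁ + y₂‖ / 2 := by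
    rw [l1Combo_apply, WithLp.toLp_fst, WithLp.toLp_snd, ← smul_add, norm_smul]
    norm_num; ring
  obtain ⟨S, x, hx, hS, hSx, hxmid, hST⟩ := h ε hε T (WithLp.toLp 1 (1 / 2, 1 / 2))
    (norm_l1Combo hy₁ hy₂.le) (by rw [WithLp.prod_norm_eq_of_L1]; norm_num)
    (by rw [hTmid]; linarith)
  obtain ⟨hfst, hsnd⟩ := l1_coords_pos_of_norm_sub_lt_one hx (hxmid.trans hε.2)
  let e₁ : WithLp 1 (ℝ × ℝ) := withLpInl 1 ℝ ℝ ℝ 1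
  let e₂ : WithLp 1 (ℝ × ℝ) := withLpInr 1 ℝ ℝ ℝ 1
  have he₁ : ‖e₁‖ = 1 := by rw [LinearIsometry.norm_map, norm_one]
  have he₂ : ‖e₂‖ = 1 := by rw [LinearIsometry.norm_map, norm_one]
  have hSe : S e₁ = S e₂ := by
    refine apply_eq_of_norm_apply_combo_eq_one hS.le he₁.le he₂.le hfst hsnd ?_ ?_
    · rw [← hx, WithLp.prod_norm_eq_of_L1, Real.norm_of_nonneg hfst.le, Real.norm_of_nonneg hsnd.le]
    · rw [← hSx]; congr 2
      exact WithLp.ofLp_injective 1 (Prod.ext (by simp [e₁, e₂]) (by simp [e₁, e₂]))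
  have hTe : y₁ - y₂ = (S - T) e₂ - (S - T) e₁ := by
    simp [hSe, T, l1Combo_apply, e₁, e₂]
  calc ‖y₁ - y₂‖ ≤ ‖(S - T) e₂‖ + ‖(S - T) e₁‖ := hTe ▸ norm_sub_le _ _
    _ ≤ ‖S - T‖ + ‖S - T‖ := by
        gcongr
        · exact (S - T).unit_le_opNorm _ he₂.le
        · exact (S - T).unit_le_opNorm _ he₁.le
    _ < 2 * ε := by linarith

theorem HasBPBp.uniformConvexSpace [StrictConvexSpace ℝ Y] (h : HasBPBp (WithLp 1 (ℝ × ℝ)) Y) :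
    UniformConvexSpace Y := by
  obtain ⟨η, hη, hBPBp⟩ := h
  refine ⟨fun ε hε => ?_⟩
  have hε' : min ε 1 / 2 ∈ Set.Ioo (0 : ℝ) 1 :=
    ⟨by positivity, by linarith [min_le_right ε 1]⟩
  refine ⟨2 * η (min ε 1 / 2), mul_pos two_pos (hη _ hε'), fun y₁ hy₁ y₂ hy₂ hsub => ?_⟩
  by_contra! hadd
  linarith [hBPBp.norm_sub_lt hε' hy₁ hy₂ hadd, min_le_left ε 1]

end BishopPhelpsBollobas

theorem not_uniformConvexSpace_of_norm_add_le {E : Type*} [NormedAddCommGroup E] [NormedSpace ℝ E]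
    {e : E} (he : e ≠ 0) {c : ℝ} (hc : 0 < c)
    (h : ∀ δ > 0, ∃ v : E, c ≤ ‖v‖ ∧ ‖e + v‖ ≤ ‖e‖ + δ ∧ ‖e - v‖ ≤ ‖e‖ + δ) :
    ¬ UniformConvexSpace E := by
  intro hE
  obtain ⟨δ, hδ, hconvex⟩ := exists_forall_closed_ball_dist_add_le_two_sub E
    (show 0 < 2 * c / (‖e‖ + 1) by positivity)
  obtain ⟨δ', hδ', hδ'one, hδ'δ⟩ : ∃ δ' > 0, δ' ≤ 1 ∧ δ' ≤ δ * ‖e‖ / 2 :=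
    ⟨min 1 (δ * ‖e‖ / 2), by positivity, min_le_left _ _, min_le_right _ _⟩
  obtain ⟨v, hv, hadd, hsub⟩ := h δ' hδ'
  have hs : 0 < ‖e‖ + δ' := by positivity
  have hscale (x : E) : ‖(‖e‖ + δ')⁻¹ • x‖ = ‖x‖ / (‖e‖ + δ') := by
    rw [norm_smul_of_nonneg (inv_nonneg.mpr hs.le), inv_mul_eq_div]
  have hsum : ‖(2 : ℝ) • e‖ / (‖e‖ + δ') ≤ 2 - δ := by
    rw [← hscale, show (2 : ℝ) • e = (e + v) + (e - v) by module, smul_add]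
    refine hconvex ?_ ?_ ?_
    · rwa [hscale, div_le_one hs]
    · rwa [hscale, div_le_one hs]
    · rw [← smul_sub, hscale, show e + v - (e - v) = (2 : ℝ) • v by module,
        norm_smul_of_nonneg zero_le_two]
      gcongr
  rw [norm_smul_of_nonneg zero_le_two, div_le_iff₀ hs] at hsum
  linarith [mul_pos hδ hδ']

section GraphSpace

variable {𝕜 E F : Type*} [NontriviallyNormedField 𝕜] [NormedAddCommGroup E] [NormedSpace 𝕜 E]
  [NormedAddCommGroup F] [NormedSpace 𝕜 F]

/-- The parametrisation `x ↦ (x, D x)` of the graph of `D`, viewed in the `ℓ₁`-sum. -/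
def graphMap (D : E →L[𝕜] F) : E →L[𝕜] WithLp 1 (E × F) :=
  (WithLp.prodContinuousLinearEquiv 1 𝕜 E F).symm ∘L (ContinuousLinearMap.id 𝕜 E).prod D

/-- The domain of `D` renormed by the graph norm `‖x‖ + ‖D x‖`, realised as the graph of `D`
inside the `ℓ₁`-sum of the domain and the codomain. -/
abbrev GraphSpace (D : E →L[𝕜] F) : Type _ := (graphMap D).range

namespace GraphSpace

/-- The identity of `E`, as an isomorphism onto `E` with the graph norm. -/
def equiv (D : E →L[𝕜] F) : E ≃L[𝕜] GraphSpace D :=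
  .equivOfInverse (graphMap D).rangeRestrict
    (WithLp.fstL 1 𝕜 E F ∘L (graphMap D).range.subtypeL) (fun _ => rfl) <| by
      rintro ⟨_, x, rfl⟩
      rfl

theorem norm_equiv (D : E →L[𝕜] F) (x : E) : ‖equiv D x‖ = ‖x‖ + ‖D x‖ :=
  WithLp.prod_norm_eq_of_L1 (graphMap D x)

variable [NormedSpace ℝ E] [NormedSpace ℝ F] {D : E →L[ℝ] F}

theorem strictConvexSpace [StrictConvexSpace ℝ F] (hD : Function.Injective D) :
    StrictConvexSpace ℝ (GraphSpace D) := by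
  refine .of_norm_add fun y₁ y₂ hy₁ hy₂ hadd => ?_
  obtain ⟨x₁, rfl⟩ := (equiv D).surjective y₁
  obtain ⟨x₂, rfl⟩ := (equiv D).surjective y₂
  rw [← map_add, norm_equiv, map_add] at hadd
  rw [norm_equiv] at hy₁ hy₂
  have hDray : SameRay ℝ (D x₁) (D x₂) := sameRay_iff_norm_add.mpr <|
    (norm_add_le _ _).antisymm (by linarith [norm_add_le x₁ x₂])
  exact (hD.sameRay_map_iff.mp hDray).map (equiv D).toLinearMap

theorem not_uniformConvexSpace {e : E} (he : e ≠ 0) {c : ℝ} (hc : 0 < c)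
    (h : ∀ δ > 0, ∃ v, c ≤ ‖v‖ ∧ ‖e + v‖ ≤ ‖e‖ ∧ ‖e - v‖ ≤ ‖e‖ ∧ ‖D v‖ ≤ δ) :
    ¬ UniformConvexSpace (GraphSpace D) := by
  refine not_uniformConvexSpace_of_norm_add_le ((map_ne_zero_iff _ (equiv D).injective).mpr he) hc
    fun δ hδ => ?_
  obtain ⟨v, hv, hadd, hsub, hDv⟩ := h δ hδ
  refine ⟨equiv D v, ?_, ?_, ?_⟩
  · rw [norm_equiv]
    linarith [norm_nonneg (D v)]
  · rw [← map_add, norm_equiv, norm_equiv, map_add]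
    linarith [norm_add_le (D e) (D v)]
  · rw [← map_sub, norm_equiv, norm_equiv, map_sub]
    linarith [norm_sub_le (D e) (D v)]

end GraphSpace

end GraphSpace

/-- The diagonal operator `(xₙ) ↦ (xₙ / (n + 1))` on `ℓ²`. -/
def harmonicDiagonal : ℓ²(ℕ, ℝ) →L[ℝ] ℓ²(ℕ, ℝ) :=
  lp.mapCLM 2 (fun n : ℕ => (1 / (n + 1 : ℝ)) • ContinuousLinearMap.id ℝ ℝ) zero_le_one
    fun n => by
      rw [norm_smul_of_nonneg (by positivity), norm_id, mul_one]
      exact div_le_one_of_le₀ (by linarith [n.cast_nonneg (α := ℝ)]) (by positivity)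

theorem harmonicDiagonal_apply (x : ℓ²(ℕ, ℝ)) (n : ℕ) :
    harmonicDiagonal x n = 1 / (n + 1 : ℝ) * x n := rfl

theorem harmonicDiagonal_injective : Function.Injective harmonicDiagonal := by
  refine fun x y hxy => lp.ext (funext fun n => ?_)
  have hn : 1 / (n + 1 : ℝ) * x n = 1 / (n + 1 : ℝ) * y n := congr($hxy n)
  exact mul_left_cancel₀ (by positivity) hn

theorem harmonicDiagonal_single (n : ℕ) :
    harmonicDiagonal (lp.single 2 n 1) = lp.single 2 n (1 / (n + 1 : ℝ)) := by
  refine lp.ext (funext fun m => ?_)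
  rw [harmonicDiagonal_apply]
  rcases eq_or_ne m n with rfl | hmn
  · simp
  · simp [hmn]

/-- The operator whose graph norm makes `ℝ ⊕_∞ ℓ²` strictly but not uniformly convex. -/
def idProdHarmonicDiagonal : ℝ × ℓ²(ℕ, ℝ) →L[ℝ] WithLp 2 (ℝ × ℓ²(ℕ, ℝ)) :=
  (WithLp.prodContinuousLinearEquiv 2 ℝ ℝ ℓ²(ℕ, ℝ)).symm ∘L
    (ContinuousLinearMap.id ℝ ℝ).prodMap harmonicDiagonal

theorem idProdHarmonicDiagonal_injective : Function.Injective idProdHarmonicDiagonal :=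
  (WithLp.prodContinuousLinearEquiv 2 ℝ ℝ ℓ²(ℕ, ℝ)).symm.injective.comp
    (Function.injective_id.prodMap harmonicDiagonal_injective)

theorem norm_idProdHarmonicDiagonal_single (n : ℕ) :
    ‖idProdHarmonicDiagonal (0, lp.single 2 n 1)‖ = 1 / (n + 1 : ℝ) := by
  calc ‖idProdHarmonicDiagonal (0, lp.single 2 n 1)‖ = ‖harmonicDiagonal (lp.single 2 n 1)‖ :=
        WithLp.norm_toLp_snd 2 ℝ ℓ²(ℕ, ℝ) _
    _ = 1 / (n + 1 : ℝ) := by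
        rw [harmonicDiagonal_single, lp.norm_single two_pos, Real.norm_of_nonneg (by positivity)]

/-- `ℝ ⊕_∞ ℓ²` with the graph norm of `idProdHarmonicDiagonal`. The added
Hilbert norm makes it strictly convex, but is too weak along `ℓ²` to make it uniformly convex at
the midpoint `(1, 0)` of the flat pieces of the unit sphere. -/
abbrev FlatSumRenorming : Type := GraphSpace idProdHarmonicDiagonal

namespace FlatSumRenorming

instance : StrictConvexSpace ℝ FlatSumRenorming :=
  GraphSpace.strictConvexSpace idProdHarmonicDiagonal_injective

theorem reflexiveSpace : ReflexiveSpace ℝ FlatSumRenorming :=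
  ((ReflexiveSpace.of_innerProductSpace ℝ ℝ).prod
    (ReflexiveSpace.of_innerProductSpace ℝ ℓ²(ℕ, ℝ))).congr (GraphSpace.equiv _)

theorem not_uniformConvexSpace : ¬ UniformConvexSpace FlatSumRenorming := by
  refine GraphSpace.not_uniformConvexSpace (e := (1, 0)) (by simp) one_pos fun δ hδ => ?_
  obtain ⟨n, hn⟩ := exists_nat_one_div_lt hδ
  have hsingle : ‖(lp.single 2 n 1 : ℓ²(ℕ, ℝ))‖ = 1 := by
    rw [lp.norm_single two_pos, norm_one]
  refine ⟨(0, lp.single 2 n 1), ?_, ?_, ?_,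
    (norm_idProdHarmonicDiagonal_single n).trans_le hn.le⟩ <;>
    simp [Prod.norm_def, hsingle]

end FlatSumRenorming

end

/-- There exists a reflexive real Banach space `X` such that the pair `(X, X)` fails the
Bishop–Phelps–Bollobás property. -/
theorem exists_reflexive_without_bpbp :
    ∃ (X : Type) (_ : NormedAddCommGroup X) (_ : NormedSpace ℝ X) (_ : CompleteSpace X),
      Function.Surjective (NormedSpace.inclusionInDoubleDual ℝ X) ∧ ¬ HasBPBp X X := by
  have hplane : ReflexiveSpace ℝ (WithLp 1 (ℝ × ℝ)) :=
    (ReflexiveSpace.of_innerProductSpace ℝ ℝ).withLp_prod 1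
      (ReflexiveSpace.of_innerProductSpace ℝ ℝ)
  have hX : ReflexiveSpace ℝ (WithLp 1 (WithLp 1 (ℝ × ℝ) × FlatSumRenorming)) :=
    hplane.withLp_prod 1 FlatSumRenorming.reflexiveSpace
  refine ⟨_, inferInstance, inferInstance, hX.completeSpace, hX, fun hBPBp => ?_⟩
  exact FlatSumRenorming.not_uniformConvexSpace hBPBp.of_withLp_prod.uniformConvexSpace
end
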